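/- Let V ∈ L^∞(ℝ) be a non-decreasing function with v₀ := ess inf_{x∈ℝ} V(x) > 0. Then m(V) = lim_{a→−∞} F(a;V) = 2√v₀. -/

import Mathlib

open MeasureTheory Filter Real Topology

/-- The supremum norm `‖u‖_∞` of a (bounded continuous) function `u : ℝ → ℝ`. -/
noncomputable def supNorm (u : ℝ → ℝ) : ℝ := ⨆ x : ℝ, |u x|

/-- `u` is (the continuous representative of) an element of `H¹(ℝ)`:
`u` is continuous, `u ∈ L²(ℝ)`, and there is a weak derivative `u' ∈ L²(ℝ)`,
i.e. `u x = u 0 + ∫_0^x u'`. -/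
def IsH1 (u : ℝ → ℝ) : Prop :=
  Continuous u ∧ MemLp u 2 (volume : Measure ℝ) ∧
    ∃ u' : ℝ → ℝ, MemLp u' 2 (volume : Measure ℝ) ∧
      ∀ x : ℝ, u x = u 0 + ∫ t in (0:ℝ)..x, u' t

/-- The Dirichlet energy `∫_ℝ |u'(x)|² dx`.  (For `u ∈ H¹(ℝ)` the classical
derivative `deriv u` exists a.e. and coincides a.e. with the weak derivative.) -/
noncomputable def energy (u : ℝ → ℝ) : ℝ := ∫ x : ℝ, (deriv u x) ^ 2

/-- `I(u;V) = ∫_ℝ (|u'(x)|² + V(x)|u(x)|²) dx` for a potential `V : ℝ → ℝ`. -/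
noncomputable def IV (V : ℝ → ℝ) (u : ℝ → ℝ) : ℝ :=
  ∫ x : ℝ, ((deriv u x) ^ 2 + V x * (u x) ^ 2)

/-- Membership in `K_a = { u ∈ H¹(ℝ) ; u(a) = ‖u‖_∞ = 1 }`. -/
def InKa (a : ℝ) (u : ℝ → ℝ) : Prop := IsH1 u ∧ u a = 1 ∧ supNorm u = 1

/-- `F(a;V) = inf { I(u;V) ; u ∈ K_a }`. -/
noncomputable def FV (V : ℝ → ℝ) (a : ℝ) : ℝ :=
  sInf {r : ℝ | ∃ u : ℝ → ℝ, InKa a u ∧ r = IV V u}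

/-- `m(V) = inf { I(u;V)/‖u‖_∞² ; u ∈ H¹(ℝ), u ≢ 0 }`. -/
noncomputable def mV (V : ℝ → ℝ) : ℝ :=
  sInf {r : ℝ | ∃ u : ℝ → ℝ, IsH1 u ∧ u ≠ 0 ∧ r = IV V u / (supNorm u) ^ 2}

/-! Expanding `(u' ∓ s u)² ≥ 0` gives `± s (u²)' ≤ u'² + s² u²`, and integrating this over the two
half-lines at `a` shows that `I(u;V) ≥ 2 s u(a)²` whenever `V ≥ s²`.  For a constant potential
equality holds at the peakon `x ↦ exp (-s |x - a|)`.  Translated to `-∞`, the peakon only sees the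
limit of `V` there, so that `I → s + v₀ / s`, which is optimal for `s = √v₀`. -/

section EssInf

variable {V : ℝ → ℝ}

lemma ae_essInf_le_of_memLp_top (hV : MemLp V ⊤ volume) : ∀ᵐ x, essInf V volume ≤ V x :=
  ae_essInf_le <| isBoundedUnder_of_eventually_ge <|
    (ae_le_lpNorm_exponent_top hV).mono fun _ hx => (abs_le.1 hx).1

lemma tendsto_atBot_essInf_of_monotone (hV : MemLp V ⊤ volume) (hmono : Monotone V) :
    Tendsto V atBot (𝓝 (essInf V volume)) := by
  have hle (x : ℝ) : essInf V volume ≤ V x := by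
    obtain ⟨y, hy, hyx⟩ :=
      (Measure.dense_of_ae (ae_essInf_le_of_memLp_top hV)).exists_lt x
    exact hy.trans (hmono hyx.le)
  refine tendsto_order.2 ⟨fun c hc => .of_forall fun x => hc.trans_le (hle x), fun c hc => ?_⟩
  obtain ⟨x, hx⟩ : ∃ x, V x < c := by
    by_contra! hcV
    have habove : IsBoundedUnder (· ≤ ·) (ae volume) V :=
      isBoundedUnder_of_eventually_le <|
        (ae_le_lpNorm_exponent_top hV).mono fun _ hx => (abs_le.1 hx).2
    exact hc.not_ge (le_essInf_of_ae_le c (.of_forall hcV) habove.isCoboundedUnder_ge)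
  filter_upwards [eventually_le_atBot x] with y hy using (hmono hy).trans_lt hx

end EssInf

namespace IsH1

variable {V u : ℝ → ℝ}

lemma memLp (hu : IsH1 u) : MemLp u 2 volume := hu.2.1

lemma memLp_deriv (hu : IsH1 u) : MemLp (deriv u) 2 volume := by
  obtain ⟨-, -, u', hu', hux⟩ := hu
  refine (memLp_congr_ae ?_).2 hu'
  filter_upwards [LocallyIntegrable.ae_hasDerivAt_integral (hu'.locallyIntegrable one_le_two)]
    with x hx
  have h := (hx 0).const_add (u 0)
  rw [← funext hux] at h
  exact h.deriv

lemma absolutelyContinuousOnInterval (hu : IsH1 u) (a b : ℝ) :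
    AbsolutelyContinuousOnInterval u a b := by
  obtain ⟨-, -, u', hu', hux⟩ := hu
  have hint (p q : ℝ) : IntervalIntegrable u' volume p q :=
    ((hu'.locallyIntegrable one_le_two).integrableOn_isCompact isCompact_uIcc).intervalIntegrable
  have hua : u = (fun _ => u a) + fun x => ∫ t in a..x, u' t := by
    funext x
    rw [Pi.add_apply, hux x, hux a, add_assoc,
      intervalIntegral.integral_add_adjacent_intervals (hint _ _) (hint _ _)]
  rw [hua]
  exact (LipschitzWith.const (u a)).lipschitzOnWith.absolutelyContinuousOnInterval.add
    ((hint a b).absolutelyContinuousOnInterval_intervalIntegral Set.left_mem_uIcc)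

lemma integrable_two_mul_mul_deriv (hu : IsH1 u) :
    Integrable fun x => 2 * (u x * deriv u x) :=
  (hu.memLp.integrable_mul hu.memLp_deriv).const_mul 2

lemma intervalIntegral_two_mul_mul_deriv (hu : IsH1 u) (a b : ℝ) :
    ∫ x in a..b, 2 * (u x * deriv u x) = u b ^ 2 - u a ^ 2 := by
  have hac := hu.absolutelyContinuousOnInterval a b
  rw [sq, sq, ← hac.integral_deriv_mul_eq_sub hac]
  congr with x
  ring

lemma integral_Iic_two_mul_mul_deriv (hu : IsH1 u) (a : ℝ) :
    ∫ x in Set.Iic a, 2 * (u x * deriv u x) = u a ^ 2 := by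
  have hlim := (intervalIntegral_tendsto_integral_Iic a
    hu.integrable_two_mul_mul_deriv.integrableOn tendsto_id).const_sub (u a ^ 2)
  simp only [id_eq, hu.intervalIntegral_two_mul_mul_deriv, sub_sub_cancel] at hlim
  have hzero := IntegrableAtFilter.eq_zero_of_tendsto
    (hu.memLp.integrable_sq.integrableAtFilter atBot) (fun s hs => ?_) hlim
  · exact (sub_eq_zero.1 hzero).symm
  · obtain ⟨b, hb⟩ := mem_atBot_sets.1 hs
    exact measure_mono_top hb Real.volume_Iic

lemma integral_Ioi_two_mul_mul_deriv (hu : IsH1 u) (a : ℝ) :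
    ∫ x in Set.Ioi a, 2 * (u x * deriv u x) = -u a ^ 2 := by
  have hlim := (intervalIntegral_tendsto_integral_Ioi a
    hu.integrable_two_mul_mul_deriv.integrableOn tendsto_id).add_const (u a ^ 2)
  simp only [id_eq, hu.intervalIntegral_two_mul_mul_deriv, sub_add_cancel] at hlim
  have hzero := IntegrableAtFilter.eq_zero_of_tendsto
    (hu.memLp.integrable_sq.integrableAtFilter atTop) (fun s hs => ?_) hlim
  · exact eq_neg_of_add_eq_zero_left hzero
  · obtain ⟨b, hb⟩ := mem_atTop_sets.1 hs
    exact measure_mono_top hb Real.volume_Ici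

lemma integrable_deriv_sq_add_mul_sq (hu : IsH1 u) (hV : MemLp V ⊤ volume) :
    Integrable fun x => deriv u x ^ 2 + V x * u x ^ 2 :=
  hu.memLp_deriv.integrable_sq.add (hu.memLp.integrable_sq.mul_of_top_right hV)

lemma two_mul_mul_sq_le_IV (hu : IsH1 u) (hV : MemLp V ⊤ volume) {s : ℝ}
    (hs : ∀ᵐ x, s ^ 2 ≤ V x) (a : ℝ) : 2 * s * u a ^ 2 ≤ IV V u := by
  have hint := hu.integrable_deriv_sq_add_mul_sq hV
  have hpoint (σ : ℝ) (hσ : σ ^ 2 = s ^ 2) :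
      ∀ᵐ x, σ * (2 * (u x * deriv u x)) ≤ deriv u x ^ 2 + V x * u x ^ 2 := by
    filter_upwards [hs] with x hx
    nlinarith [sq_nonneg (deriv u x - σ * u x), mul_le_mul_of_nonneg_right hx (sq_nonneg (u x))]
  have hhalf (σ : ℝ) (hσ : σ ^ 2 = s ^ 2) (S : Set ℝ) :
      σ * ∫ x in S, 2 * (u x * deriv u x) ≤ ∫ x in S, deriv u x ^ 2 + V x * u x ^ 2 := by
    rw [← integral_const_mul]
    exact setIntegral_mono_ae (hu.integrable_two_mul_mul_deriv.const_mul σ).integrableOn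
      hint.integrableOn (hpoint σ hσ)
  calc 2 * s * u a ^ 2
      = s * (∫ x in Set.Iic a, 2 * (u x * deriv u x))
          + -s * ∫ x in Set.Ioi a, 2 * (u x * deriv u x) := by
        rw [hu.integral_Iic_two_mul_mul_deriv, hu.integral_Ioi_two_mul_mul_deriv]
        ring
    _ ≤ (∫ x in Set.Iic a, deriv u x ^ 2 + V x * u x ^ 2)
          + ∫ x in Set.Ioi a, deriv u x ^ 2 + V x * u x ^ 2 :=
        add_le_add (hhalf s rfl _) (hhalf (-s) (neg_sq s) _)
    _ = IV V u := intervalIntegral.integral_Iic_add_Ioi hint.integrableOn hint.integrableOn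

lemma bddAbove_range_abs (hu : IsH1 u) : BddAbove (Set.range fun x => |u x|) := by
  refine ⟨√(IV (fun _ => 1) u / 2), ?_⟩
  rintro _ ⟨x, rfl⟩
  have h := hu.two_mul_mul_sq_le_IV (memLp_top_const 1) (s := 1) (by simp) x
  exact Real.abs_le_sqrt (by linarith)

lemma supNorm_pos (hu : IsH1 u) (h0 : u ≠ 0) : 0 < supNorm u := by
  obtain ⟨x, hx⟩ := Function.ne_iff.1 h0
  exact (abs_pos.2 hx).trans_le (le_ciSup hu.bddAbove_range_abs x)

end IsH1

lemma mul_supNorm_sq_le {u : ℝ → ℝ} {k c : ℝ} (hk : 0 ≤ k) (h : ∀ x, k * u x ^ 2 ≤ c) :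
    k * supNorm u ^ 2 ≤ c := by
  have hsup : √k * supNorm u ≤ √c := by
    rw [supNorm, Real.mul_iSup_of_nonneg (Real.sqrt_nonneg k)]
    refine ciSup_le fun x => Real.le_sqrt_of_sq_le ?_
    rw [mul_pow, Real.sq_sqrt hk, sq_abs]
    exact h x
  have hc : 0 ≤ c := (mul_nonneg hk (sq_nonneg (u 0))).trans (h 0)
  have hnonneg : 0 ≤ √k * supNorm u :=
    mul_nonneg (Real.sqrt_nonneg k) (Real.iSup_nonneg fun x => abs_nonneg (u x))
  calc k * supNorm u ^ 2 = (√k * supNorm u) ^ 2 := by rw [mul_pow, Real.sq_sqrt hk]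
    _ ≤ √c ^ 2 := pow_le_pow_left₀ hnonneg hsup 2
    _ = c := Real.sq_sqrt hc

lemma integral_exp_neg_mul_abs {t : ℝ} (ht : 0 < t) : ∫ x : ℝ, exp (-t * |x|) = 2 / t := by
  rw [integral_comp_abs (f := fun x => exp (-t * x)), integral_exp_mul_Ioi (neg_lt_zero.2 ht),
    mul_zero, exp_zero, neg_div_neg_eq, mul_one_div]

lemma integrable_exp_neg_mul_abs {t : ℝ} (ht : 0 < t) : Integrable fun x : ℝ => exp (-t * |x|) :=
  not_imp_comm.1 integral_undef <| by
    rw [integral_exp_neg_mul_abs ht]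
    positivity

/-- The peakon `x ↦ exp (-s |x - a|)` of decay rate `s` centred at `a`, the test function for the
upper bounds on `F(a;V)`. -/
noncomputable def peakon (s a x : ℝ) : ℝ := exp (-s * |x - a|)

section Peakon

variable {V : ℝ → ℝ} {s : ℝ}

lemma continuous_peakon (s a : ℝ) : Continuous (peakon s a) := by
  unfold peakon
  fun_prop

lemma peakon_self (s a : ℝ) : peakon s a a = 1 := by simp [peakon]

lemma peakon_sq (s a x : ℝ) : peakon s a x ^ 2 = exp (-(2 * s) * |x - a|) := by
  rw [peakon, ← exp_nat_mul]
  congr 1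
  push_cast
  ring

lemma hasDerivAt_peakon (s : ℝ) {a x : ℝ} (hx : x ≠ a) :
    HasDerivAt (peakon s a) (peakon s a x * (-s * SignType.sign (x - a))) x := by
  have habs := (hasDerivAt_abs (sub_ne_zero.2 hx)).comp_sub_const x a
  exact (habs.const_mul (-s)).exp

lemma deriv_peakon_sq (s : ℝ) {a x : ℝ} (hx : x ≠ a) :
    deriv (peakon s a) x ^ 2 = s ^ 2 * peakon s a x ^ 2 := by
  rw [(hasDerivAt_peakon s hx).deriv]
  rcases hx.lt_or_gt with h | h
  · rw [sign_neg (sub_neg.2 h), SignType.coe_neg_one]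
    ring
  · rw [sign_pos (sub_pos.2 h), SignType.coe_one]
    ring

lemma ae_deriv_peakon_sq (s a : ℝ) :
    ∀ᵐ x, deriv (peakon s a) x ^ 2 = s ^ 2 * peakon s a x ^ 2 := by
  filter_upwards [Measure.ae_ne volume a] with x hx using deriv_peakon_sq s hx

lemma integrable_peakon_sq (hs : 0 < s) (a : ℝ) : Integrable fun x => peakon s a x ^ 2 := by
  simp_rw [peakon_sq]
  exact (integrable_exp_neg_mul_abs (t := 2 * s) (by positivity)).comp_sub_right a

lemma isH1_peakon (hs : 0 < s) (a : ℝ) : IsH1 (peakon s a) := by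
  have hderiv : MemLp (deriv (peakon s a)) 2 volume := by
    rw [memLp_two_iff_integrable_sq (measurable_deriv _).aestronglyMeasurable,
      integrable_congr (ae_deriv_peakon_sq s a)]
    exact (integrable_peakon_sq hs a).const_mul _
  refine ⟨continuous_peakon s a, ?_, deriv (peakon s a), hderiv, fun x => ?_⟩
  · exact (memLp_two_iff_integrable_sq (continuous_peakon s a).aestronglyMeasurable).2
      (integrable_peakon_sq hs a)
  · rw [integral_eq_of_hasDerivAt_off_countable (peakon s a) _ (Set.countable_singleton a)
      (continuous_peakon s a).continuousOn
      (fun y hy => (hasDerivAt_peakon s hy.2).differentiableAt.hasDerivAt)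
      ((hderiv.locallyIntegrable one_le_two).integrableOn_isCompact
        isCompact_uIcc).intervalIntegrable, add_sub_cancel]

lemma supNorm_peakon (hs : 0 ≤ s) (a : ℝ) : supNorm (peakon s a) = 1 := by
  have hle (x : ℝ) : |peakon s a x| ≤ 1 := by
    rw [peakon, abs_exp, exp_le_one_iff, neg_mul, neg_nonpos]
    positivity
  refine le_antisymm (ciSup_le hle) ?_
  calc 1 = |peakon s a a| := by rw [peakon_self, abs_one]
    _ ≤ supNorm (peakon s a) := le_ciSup ⟨1, Set.forall_mem_range.2 hle⟩ a

lemma inKa_peakon (hs : 0 < s) (a : ℝ) : InKa a (peakon s a) :=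
  ⟨isH1_peakon hs a, peakon_self s a, supNorm_peakon hs.le a⟩

lemma IV_peakon (hV : MemLp V ⊤ volume) (hs : 0 < s) (a : ℝ) :
    IV V (peakon s a) = s + ∫ y, V (y + a) * exp (-(2 * s) * |y|) := by
  have hsq := integrable_peakon_sq hs a
  calc IV V (peakon s a)
      = ∫ x, s ^ 2 * peakon s a x ^ 2 + V x * peakon s a x ^ 2 :=
        integral_congr_ae <| (ae_deriv_peakon_sq s a).mono fun x hx => by simp only [hx]
    _ = s ^ 2 * (∫ x, peakon s a x ^ 2) + ∫ x, V x * peakon s a x ^ 2 := by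
        rw [← integral_const_mul]
        exact integral_add (hsq.const_mul _) (hsq.mul_of_top_right hV)
    _ = s ^ 2 * (∫ y, exp (-(2 * s) * |y|)) + ∫ y, V (y + a) * exp (-(2 * s) * |y|) := by
        rw [← integral_add_right_eq_self (fun x => peakon s a x ^ 2) a,
          ← integral_add_right_eq_self (fun x => V x * peakon s a x ^ 2) a]
        simp only [peakon_sq, add_sub_cancel_right]
    _ = s + ∫ y, V (y + a) * exp (-(2 * s) * |y|) := by
        rw [integral_exp_neg_mul_abs (by positivity)]
        field_simp

end Peakon

lemma tendsto_integral_comp_add_mul_atBot {V g : ℝ → ℝ} {v : ℝ} (hV : MemLp V ⊤ volume)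
    (hg : Integrable g) (hlim : Tendsto V atBot (𝓝 v)) :
    Tendsto (fun a => ∫ y, V (y + a) * g y) atBot (𝓝 (v * ∫ y, g y)) := by
  have htranslate (a : ℝ) := measurePreserving_add_right volume a
  rw [← integral_const_mul]
  refine tendsto_integral_filter_of_dominated_convergence
    (fun y => lpNorm V ⊤ volume * ‖g y‖) (.of_forall fun a => ?_) (.of_forall fun a => ?_)
    (hg.norm.const_mul _) (.of_forall fun y => ?_)
  · exact (hV.1.comp_measurePreserving (htranslate a)).mul hg.1
  · filter_upwards [(htranslate a).quasiMeasurePreserving.ae (ae_le_lpNorm_exponent_top hV)]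
      with y hy
    rw [norm_mul]
    gcongr
  · exact (hlim.comp (tendsto_atBot_add_const_left _ y tendsto_id)).mul_const _

lemma tendsto_IV_peakon_atBot {V : ℝ → ℝ} {v s : ℝ} (hV : MemLp V ⊤ volume)
    (hlim : Tendsto V atBot (𝓝 v)) (hs : 0 < s) :
    Tendsto (fun a => IV V (peakon s a)) atBot (𝓝 (s + v / s)) := by
  have h2s : 0 < 2 * s := by positivity
  have h := tendsto_integral_comp_add_mul_atBot hV (integrable_exp_neg_mul_abs h2s) hlim
  rw [integral_exp_neg_mul_abs h2s, div_mul_cancel_left₀ two_ne_zero, ← div_eq_mul_inv] at h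
  simp_rw [IV_peakon hV hs]
  exact h.const_add s

section Infima

variable {V u : ℝ → ℝ} {a s v : ℝ}

lemma IV_nonneg (hV : 0 ≤ᵐ[volume] V) (u : ℝ → ℝ) : 0 ≤ IV V u :=
  integral_nonneg_of_ae <| hV.mono fun x hx =>
    add_nonneg (sq_nonneg (deriv u x)) (mul_nonneg hx (sq_nonneg (u x)))

lemma FV_le_IV (hV : 0 ≤ᵐ[volume] V) (hu : InKa a u) : FV V a ≤ IV V u := by
  refine csInf_le ⟨0, ?_⟩ ⟨u, hu, rfl⟩
  rintro _ ⟨w, -, rfl⟩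
  exact IV_nonneg hV w

lemma mV_le_IV_div (hV : 0 ≤ᵐ[volume] V) (hu : IsH1 u) (h0 : u ≠ 0) :
    mV V ≤ IV V u / supNorm u ^ 2 := by
  refine csInf_le ⟨0, ?_⟩ ⟨u, hu, h0, rfl⟩
  rintro _ ⟨w, -, -, rfl⟩
  exact div_nonneg (IV_nonneg hV w) (sq_nonneg _)

lemma InKa.ne_zero (hu : InKa a u) : u ≠ 0 := by
  rintro rfl
  exact zero_ne_one hu.2.1

lemma mV_le_FV (hV : 0 ≤ᵐ[volume] V) (a : ℝ) : mV V ≤ FV V a := by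
  refine le_csInf ⟨_, peakon 1 a, inKa_peakon one_pos a, rfl⟩ ?_
  rintro _ ⟨u, hu, rfl⟩
  simpa only [hu.2.2, one_pow, div_one] using mV_le_IV_div hV hu.1 hu.ne_zero

lemma two_mul_le_FV (hV : MemLp V ⊤ volume) (hsV : ∀ᵐ x, s ^ 2 ≤ V x) (a : ℝ) :
    2 * s ≤ FV V a := by
  refine le_csInf ⟨_, peakon 1 a, inKa_peakon one_pos a, rfl⟩ ?_
  rintro _ ⟨u, ⟨hu, hua, -⟩, rfl⟩
  simpa only [hua, one_pow, mul_one] using hu.two_mul_mul_sq_le_IV hV hsV a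

lemma two_mul_le_mV (hV : MemLp V ⊤ volume) (hs : 0 ≤ s) (hsV : ∀ᵐ x, s ^ 2 ≤ V x) :
    2 * s ≤ mV V := by
  have hpeakon := inKa_peakon one_pos 0
  refine le_csInf ⟨_, peakon 1 0, hpeakon.1, hpeakon.ne_zero, rfl⟩ ?_
  rintro _ ⟨u, hu, h0, rfl⟩
  rw [le_div_iff₀ (pow_pos (hu.supNorm_pos h0) 2)]
  exact mul_supNorm_sq_le (by positivity) (hu.two_mul_mul_sq_le_IV hV hsV)

/-- For `v = 0` the infimum `2√v` of `s + v / s` is not attained, hence the margin `c`. -/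
lemma exists_pos_add_div_lt {c : ℝ} (hv : 0 ≤ v) (hc : 2 * √v < c) : ∃ s > 0, s + v / s < c := by
  obtain ⟨δ, hδ, hδc⟩ := exists_between (sub_pos.2 hc)
  have hpos : 0 < √v + δ := by positivity
  refine ⟨√v + δ, hpos, ?_⟩
  have hdiv : v / (√v + δ) ≤ √v := by
    rw [div_le_iff₀ hpos]
    nlinarith [Real.mul_self_sqrt hv, Real.sqrt_nonneg v]
  linarith

lemma tendsto_FV_atBot (hV : MemLp V ⊤ volume) (hv : 0 ≤ v) (hvV : ∀ᵐ x, v ≤ V x)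
    (hlim : Tendsto V atBot (𝓝 v)) : Tendsto (FV V) atBot (𝓝 (2 * √v)) := by
  have hV0 : 0 ≤ᵐ[volume] V := hvV.mono fun x hx => hv.trans hx
  refine tendsto_order.2 ⟨fun c hc => .of_forall fun a => hc.trans_le ?_, fun c hc => ?_⟩
  · exact two_mul_le_FV hV (by simpa only [Real.sq_sqrt hv] using hvV) a
  · obtain ⟨s, hs, hsc⟩ := exists_pos_add_div_lt hv hc
    filter_upwards [(tendsto_IV_peakon_atBot hV hlim hs).eventually_lt_const hsc] with a ha
    exact (FV_le_IV hV0 (inKa_peakon hs a)).trans_lt ha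

end Infima

theorem mV_of_monotone_general (V : ℝ → ℝ) (hV : MemLp V ⊤ (volume : Measure ℝ))
    (hlim : Tendsto V atBot (𝓝 (essInf V (volume : Measure ℝ))))
    (hnonneg : 0 ≤ essInf V (volume : Measure ℝ)) :
    Tendsto (fun a : ℝ => FV V a) atBot
        (𝓝 (2 * Real.sqrt (essInf V (volume : Measure ℝ)))) ∧
      mV V = 2 * Real.sqrt (essInf V (volume : Measure ℝ)) := by
  have hle := ae_essInf_le_of_memLp_top hV
  have hF := tendsto_FV_atBot hV hnonneg hle hlim
  refine ⟨hF, le_antisymm (ge_of_tendsto' hF fun a => ?_) ?_⟩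
  · exact mV_le_FV (hle.mono fun x hx => hnonneg.trans hx) a
  · exact two_mul_le_mV hV (Real.sqrt_nonneg _) (by simpa only [Real.sq_sqrt hnonneg] using hle)

/-- **Non-decreasing potentials.** If `V ∈ L^∞(ℝ)` is non-decreasing with
`v₀ := ess inf V > 0`, then `m(V) = lim_{a → -∞} F(a;V) = 2√v₀`. -/
theorem mV_of_monotone (V : ℝ → ℝ) (hV : MemLp V ⊤ (volume : Measure ℝ))
    (hmono : Monotone V) (hpos : 0 < essInf V (volume : Measure ℝ)) :
    Tendsto (fun a : ℝ => FV V a) atBot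
        (𝓝 (2 * Real.sqrt (essInf V (volume : Measure ℝ)))) ∧
      mV V = 2 * Real.sqrt (essInf V (volume : Measure ℝ)) := by
  exact mV_of_monotone_general V hV (tendsto_atBot_essInf_of_monotone hV hmono) hpos.le
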